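/- Let λ > -1/2 and m ≥ 1, and set λ' = min{0,λ}, λ'' = max{0,λ}, c_4 = 4/((2λ+1)²(2λ+5)) and F_0(x) = x²(x + λ/2)²(x + λ)². Then the squared Frobenius norm of A_m satisfies c_4·(m+λ')(m+λ'+4)·F_0(m) ≤ ‖A_m‖_F² ≤ c_4·(m+λ+λ''+5/2)²·F_0(m+1/2). -/

import Mathlib

/-- `h_x^2 = Γ(x+2λ)/((x+λ)Γ(x+1))`. -/
noncomputable def hsq (lam x : ℝ) : ℝ :=
  Real.Gamma (x + 2*lam) / ((x + lam) * Real.Gamma (x + 1))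

/-- `α_k = (2k-1+λ) h_{2k-1}`. -/
noncomputable def gegAlpha (lam : ℝ) (k : ℕ) : ℝ :=
  (2*(k:ℝ) - 1 + lam) * Real.sqrt (hsq lam (2*(k:ℝ) - 1))

/-- `β_k = 1/h_{2k}`. -/
noncomputable def gegBeta (lam : ℝ) (k : ℕ) : ℝ :=
  1 / Real.sqrt (hsq lam (2*(k:ℝ)))

/-- `α̃_k^2 = ((2k-2+λ) h_{2k-2})^2`, with `α̃_1^2 = λΓ(2λ) = Γ(2λ+1)/2`. -/
noncomputable def gegAlphaTildeSq (lam : ℝ) (k : ℕ) : ℝ :=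
  if k = 1 then Real.Gamma (2*lam + 1) / 2
  else (2*(k:ℝ) - 2 + lam)^2 * hsq lam (2*(k:ℝ) - 2)

/-- `β̃_k = 1/h_{2k-1}`. -/
noncomputable def gegBetaTilde (lam : ℝ) (k : ℕ) : ℝ :=
  1 / Real.sqrt (hsq lam (2*(k:ℝ) - 1))

/-- The matrix `A_m` with entries `a_{kj} = (Σ_{i=1}^{min(k,j)} α_i^2) β_k β_j` (1-based). -/
noncomputable def Amat (lam : ℝ) (m : ℕ) : Matrix (Fin m) (Fin m) ℝ :=
  fun k j => (∑ i ∈ Finset.Icc 1 (min (k.val+1) (j.val+1)), (gegAlpha lam i)^2) *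
    gegBeta lam (k.val+1) * gegBeta lam (j.val+1)

/-- The matrix `Ã_m` with entries `ã_{kj} = (Σ_{i=1}^{min(k,j)} α̃_i^2) β̃_k β̃_j` (1-based). -/
noncomputable def AmatTilde (lam : ℝ) (m : ℕ) : Matrix (Fin m) (Fin m) ℝ :=
  fun k j => (∑ i ∈ Finset.Icc 1 (min (k.val+1) (j.val+1)), gegAlphaTildeSq lam i) *
    gegBetaTilde lam (k.val+1) * gegBetaTilde lam (j.val+1)

/-- `B_n = 4 A_m` for `n = 2m` and `B_n = 4 Ã_m` for `n = 2m-1`; in both cases `m = (n+1)/2`. -/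
noncomputable def Bmat (lam : ℝ) (n : ℕ) : Matrix (Fin ((n+1)/2)) (Fin ((n+1)/2)) ℝ :=
  if n % 2 = 0 then (4:ℝ) • Amat lam ((n+1)/2) else (4:ℝ) • AmatTilde lam ((n+1)/2)

/-- Maximum absolute row-sum norm. -/
noncomputable def rowSumNorm {m : ℕ} (A : Matrix (Fin m) (Fin m) ℝ) : ℝ :=
  ⨆ k, ∑ j, |A k j|

/-- Squared Frobenius norm. -/
noncomputable def frobSq {m : ℕ} (A : Matrix (Fin m) (Fin m) ℝ) : ℝ :=
  ∑ k, ∑ j, (A k j)^2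

open Finset in
/-- The increment in `m` of the squared Frobenius norm of the `m × m` matrix with entries
`S (min k j) * b k * b j`. -/
theorem sum_sum_min_succ (S b : ℕ → ℝ) (m : ℕ) :
    ∑ k ∈ range (m + 1), ∑ j ∈ range (m + 1), (S (min k j) * b k * b j)^2 =
      ∑ k ∈ range m, ∑ j ∈ range m, (S (min k j) * b k * b j)^2 +
        (2 * ((∑ j ∈ range (m + 1), S j ^ 2 * b j ^ 2) * b m ^ 2) - (S m * b m ^ 2)^2) := by
  have h₁ : ∑ j ∈ range m, (S (min m j) * b m * b j)^2 =
      (∑ j ∈ range m, S j ^ 2 * b j ^ 2) * b m ^ 2 := by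
    rw [sum_mul]
    refine sum_congr rfl fun j hj => ?_
    rw [min_eq_right (mem_range.mp hj).le]
    ring
  have h₂ : ∑ k ∈ range m, (S (min k m) * b k * b m)^2 =
      (∑ j ∈ range m, S j ^ 2 * b j ^ 2) * b m ^ 2 := by
    rw [sum_mul]
    refine sum_congr rfl fun j hj => ?_
    rw [min_eq_left (mem_range.mp hj).le]
    ring
  rw [sum_range_succ, sum_congr rfl fun k _ => sum_range_succ _ m, sum_add_distrib,
    sum_range_succ _ m, h₁, h₂, sum_range_succ _ m, min_self]
  ring

theorem hsq_pos {lam x : ℝ} (hlam : -(1/2 : ℝ) < lam) (hx : 1 ≤ x) : 0 < hsq lam x := by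
  have h₁ : 0 < Real.Gamma (x + 2*lam) := Real.Gamma_pos_of_pos (by linarith)
  have h₂ : 0 < Real.Gamma (x + 1) := Real.Gamma_pos_of_pos (by linarith)
  have h₃ : 0 < x + lam := by linarith
  unfold hsq
  positivity

theorem gegBeta_sq {lam : ℝ} (hlam : -(1/2 : ℝ) < lam) {k : ℕ} (hk : 1 ≤ k) :
    gegBeta lam k ^ 2 =
      (2*(k:ℝ) + lam) * Real.Gamma (2*(k:ℝ) + 1) / Real.Gamma (2*(k:ℝ) + 2*lam) := by
  have hk' : (1:ℝ) ≤ k := by exact_mod_cast hk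
  rw [gegBeta, div_pow, Real.sq_sqrt (hsq_pos hlam (by linarith)).le, hsq, one_pow, one_div_div]

theorem gegAlpha_sq {lam : ℝ} (hlam : -(1/2 : ℝ) < lam) {k : ℕ} (hk : 1 ≤ k) :
    gegAlpha lam k ^ 2 =
      (2*(k:ℝ) - 1 + lam) * Real.Gamma (2*(k:ℝ) - 1 + 2*lam) / Real.Gamma (2*(k:ℝ)) := by
  have hk' : (1:ℝ) ≤ k := by exact_mod_cast hk
  have h : 2*(k:ℝ) - 1 + lam ≠ 0 := by linarith
  rw [gegAlpha, mul_pow, Real.sq_sqrt (hsq_pos hlam (by linarith)).le, hsq, sub_add_cancel]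
  field_simp

theorem gegAlpha_sq_mul_gegBeta_sq {lam : ℝ} (hlam : -(1/2 : ℝ) < lam) {k : ℕ} (hk : 1 ≤ k) :
    gegAlpha lam k ^ 2 * gegBeta lam k ^ 2 =
      (2*(k:ℝ) - 1 + lam) * (2*(k:ℝ) + lam) * (2*(k:ℝ)) / (2*(k:ℝ) - 1 + 2*lam) := by
  have hk' : (1:ℝ) ≤ k := by exact_mod_cast hk
  have h₁ : 0 < 2*(k:ℝ) - 1 + 2*lam := by linarith
  have h₂ : 0 < 2*(k:ℝ) := by linarith
  have g₁ := (Real.Gamma_pos_of_pos h₁).ne'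
  have g₂ := (Real.Gamma_pos_of_pos h₂).ne'
  rw [gegAlpha_sq hlam hk, gegBeta_sq hlam hk, Real.Gamma_add_one h₂.ne',
    show 2*(k:ℝ) + 2*lam = (2*(k:ℝ) - 1 + 2*lam) + 1 by ring, Real.Gamma_add_one h₁.ne']
  field_simp

theorem gegBeta_sq_succ {lam : ℝ} (hlam : -(1/2 : ℝ) < lam) {k : ℕ} (hk : 1 ≤ k) :
    gegBeta lam (k + 1) ^ 2 = gegBeta lam k ^ 2 *
      ((2*(k:ℝ) + 2 + lam) * (2*(k:ℝ) + 2) * (2*(k:ℝ) + 1) /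
        ((2*(k:ℝ) + lam) * (2*(k:ℝ) + 2*lam + 1) * (2*(k:ℝ) + 2*lam))) := by
  have hk' : (1:ℝ) ≤ k := by exact_mod_cast hk
  have h₁ : 0 < 2*(k:ℝ) + 2*lam := by linarith
  have h₂ : 0 < 2*(k:ℝ) + 1 := by linarith
  have h₃ : 0 < 2*(k:ℝ) + 2*lam + 1 := by linarith
  have h₄ : 0 < 2*(k:ℝ) + 1 + 1 := by linarith
  have h₅ : 0 < 2*(k:ℝ) + lam := by linarith
  have g₁ := (Real.Gamma_pos_of_pos h₁).ne'
  have g₂ := (Real.Gamma_pos_of_pos h₂).ne'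
  rw [gegBeta_sq hlam hk, gegBeta_sq hlam (Nat.le_add_left 1 k)]
  push_cast
  rw [show 2*((k:ℝ) + 1) + 1 = (2*(k:ℝ) + 1) + 1 + 1 by ring, Real.Gamma_add_one h₄.ne',
    Real.Gamma_add_one h₂.ne', show 2*((k:ℝ) + 1) + 2*lam = (2*(k:ℝ) + 2*lam) + 1 + 1 by ring,
    Real.Gamma_add_one h₃.ne', Real.Gamma_add_one h₁.ne']
  field_simp
  ring

/-- The partial sums `Σ_{i ≤ k} α_i²`. -/
noncomputable def gegAlphaSum (lam : ℝ) (k : ℕ) : ℝ :=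
  ∑ i ∈ Finset.Icc 1 k, gegAlpha lam i ^ 2

/-- The diagonal entries of `A_m`. -/
theorem gegAlphaSum_mul_gegBeta_sq {lam : ℝ} (hlam : -(1/2 : ℝ) < lam) (n : ℕ) :
    gegAlphaSum lam (n + 1) * gegBeta lam (n + 1) ^ 2 =
      2 * (((n:ℝ) + 1) * (2*((n:ℝ) + 1) + lam) * ((n:ℝ) + 1 + lam)) / (2*lam + 1) := by
  have h₀ : 2*lam + 1 ≠ 0 := by linarith
  induction n with
  | zero =>
    simp only [gegAlphaSum, zero_add, Finset.Icc_self, Finset.sum_singleton]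
    rw [gegAlpha_sq_mul_gegBeta_sq hlam le_rfl]
    have h : (2:ℝ) - 1 + 2*lam ≠ 0 := by linarith
    push_cast
    field_simp
    ring
  | succ n ih =>
    have hn : (0:ℝ) ≤ n := n.cast_nonneg
    have h := gegAlpha_sq_mul_gegBeta_sq hlam (Nat.le_add_left 1 (n + 1))
    unfold gegAlphaSum at ih ⊢
    rw [Finset.sum_Icc_succ_top (by omega), add_mul, h,
      gegBeta_sq_succ hlam (Nat.le_add_left 1 n), ← mul_assoc, ih]
    push_cast
    have h₁ : 2*((n:ℝ) + 1) + lam ≠ 0 := by linarith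
    have h₂ : 2*((n:ℝ) + 1) + 2*lam + 1 ≠ 0 := by linarith
    have h₃ : 2*((n:ℝ) + 1) + 2*lam ≠ 0 := by linarith
    have h₄ : 2*((n:ℝ) + 1 + 1) - 1 + 2*lam ≠ 0 := by linarith
    rw [div_mul_div_comm, div_add_div _ _ (by positivity) h₄, div_eq_div_iff (by positivity) h₀]
    ring

/-- The sum of the squares of the first `n + 1` entries in row `n + 1` of `A_m`. -/
theorem sum_gegAlphaSum_sq_mul_gegBeta_sq {lam : ℝ} (hlam : -(1/2 : ℝ) < lam) (n : ℕ) :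
    (∑ j ∈ Finset.range (n + 1), gegAlphaSum lam (j + 1) ^ 2 * gegBeta lam (j + 1) ^ 2) *
        gegBeta lam (n + 1) ^ 2 =
      ((n:ℝ) + 1) * ((n:ℝ) + 1 + lam) * (2*((n:ℝ) + 1) + lam) * (2*((n:ℝ) + 1) + 2*lam + 1) *
        ((n:ℝ) + 2 + lam) * (((n:ℝ) + 1) * ((n:ℝ) + 2 + lam) * (2*lam + 3) - 1) * 4 /
        ((2*lam + 1)^2 * (2*lam + 5) * (2*lam + 3)) := by
  have h₀ : 2*lam + 1 ≠ 0 := by linarith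
  have h₃ : 2*lam + 3 ≠ 0 := by linarith
  have h₅ : 2*lam + 5 ≠ 0 := by linarith
  induction n with
  | zero =>
    have h := gegAlphaSum_mul_gegBeta_sq hlam 0
    rw [Finset.sum_range_one,
      show ∀ s b : ℝ, s ^ 2 * b ^ 2 * b ^ 2 = (s * b ^ 2) ^ 2 by intros; ring, h]
    push_cast
    field_simp
    ring
  | succ n ih =>
    have hn : (0:ℝ) ≤ n := n.cast_nonneg
    have h := gegAlphaSum_mul_gegBeta_sq hlam (n + 1)
    rw [Finset.sum_range_succ, add_mul,
      show ∀ s b : ℝ, s ^ 2 * b ^ 2 * b ^ 2 = (s * b ^ 2) ^ 2 by intros; ring, h,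
      gegBeta_sq_succ hlam (Nat.le_add_left 1 n), ← mul_assoc, ih]
    push_cast
    have h₁ : 2*((n:ℝ) + 1) + lam ≠ 0 := by linarith
    have h₂ : 2*((n:ℝ) + 1) + 2*lam + 1 ≠ 0 := by linarith
    have h₄ : 2*((n:ℝ) + 1) + 2*lam ≠ 0 := by linarith
    rw [div_mul_div_comm, div_pow, div_add_div _ _ (by positivity) (by positivity),
      div_eq_div_iff (by positivity) (by positivity)]
    ring

theorem frobSq_Amat_eq_sum_range (lam : ℝ) (m : ℕ) :
    frobSq (Amat lam m) = ∑ k ∈ Finset.range m, ∑ j ∈ Finset.range m,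
      (gegAlphaSum lam (min k j + 1) * gegBeta lam (k + 1) * gegBeta lam (j + 1)) ^ 2 := by
  simp only [frobSq, Amat, Finset.sum_range, gegAlphaSum, min_add_add_right]

/-- The increments of `m ↦ ‖A_m‖_F²`, with denominators cleared. -/
theorem frobSq_Amat_succ {lam : ℝ} (hlam : -(1/2 : ℝ) < lam) (n : ℕ) :
    (2*lam + 1)^2 * (2*lam + 5) * (2*lam + 3) * frobSq (Amat lam (n + 1)) =
      (2*lam + 1)^2 * (2*lam + 5) * (2*lam + 3) * frobSq (Amat lam n) +
        (8 * (((n:ℝ) + 1) * ((n:ℝ) + 1 + lam) * (2*((n:ℝ) + 1) + lam) *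
          (2*((n:ℝ) + 1) + 2*lam + 1) * ((n:ℝ) + 2 + lam) *
          (((n:ℝ) + 1) * ((n:ℝ) + 2 + lam) * (2*lam + 3) - 1)) -
        4 * (((n:ℝ) + 1) * (2*((n:ℝ) + 1) + lam) * ((n:ℝ) + 1 + lam)) ^ 2 *
          (2*lam + 5) * (2*lam + 3)) := by
  have h₀ : 2*lam + 1 ≠ 0 := by linarith
  have h₃ : 2*lam + 3 ≠ 0 := by linarith
  have h₅ : 2*lam + 5 ≠ 0 := by linarith
  rw [frobSq_Amat_eq_sum_range, frobSq_Amat_eq_sum_range,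
    sum_sum_min_succ (fun i => gegAlphaSum lam (i + 1)) (fun i => gegBeta lam (i + 1)),
    sum_gegAlphaSum_sq_mul_gegBeta_sq hlam, gegAlphaSum_mul_gegBeta_sq hlam]
  field_simp
  ring

theorem frobSq_Amat_zero (lam : ℝ) : frobSq (Amat lam 0) = 0 := by
  simp [frobSq]

theorem le_frobSq_Amat_of_nonneg {lam : ℝ} (hlam : 0 ≤ lam) (m : ℕ) :
    4 * (2*lam + 3) * ((m : ℝ) * ((m : ℝ) + 4)) *
        ((m : ℝ)^2 * ((m : ℝ) + lam/2)^2 * ((m : ℝ) + lam)^2) ≤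
      (2*lam + 1)^2 * (2*lam + 5) * (2*lam + 3) * frobSq (Amat lam m) := by
  induction m with
  | zero => simp [frobSq_Amat_zero]
  | succ n ih =>
    rw [frobSq_Amat_succ (by linarith)]
    refine le_trans ?_ (add_le_add_left ih _)
    push_cast
    rw [← sub_nonneg]
    ring_nf
    positivity

theorem le_frobSq_Amat_of_nonpos {lam : ℝ} (hlam : -(1/2 : ℝ) < lam) (hlam' : lam ≤ 0) (m : ℕ) :
    4 * (2*lam + 3) * (((m : ℝ) + lam) * ((m : ℝ) + lam + 4)) *
        ((m : ℝ)^2 * ((m : ℝ) + lam/2)^2 * ((m : ℝ) + lam)^2) ≤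
      (2*lam + 1)^2 * (2*lam + 5) * (2*lam + 3) * frobSq (Amat lam m) := by
  induction m with
  | zero => simp [frobSq_Amat_zero]
  | succ n ih =>
    rw [frobSq_Amat_succ hlam]
    refine le_trans ?_ (add_le_add_left ih _)
    obtain ⟨t, rfl⟩ : ∃ t, lam = t - 1/2 := ⟨lam + 1/2, by ring⟩
    have ht : 0 ≤ t := by linarith
    have hu : 0 ≤ 1 - 2*t := by linarith
    have hn : (0:ℝ) ≤ n := n.cast_nonneg
    push_cast
    generalize (n : ℝ) = n at hn ⊢
    have key : 0 ≤
      n^6*((1 - 2*t)*(28 + 28*t)) +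
      n^5*(369 + 254*t + (1 - 2*t)*(135*t + 86*t^2)) +
      n^4*(1235/2 + 3395/2*t + 695*t^2 + (1 - 2*t)*(215*t^2 + 100*t^3)) +
      n^3*(669 + 2337*t + 2668*t^2 + 700*t^3 + (1 - 2*t)*(156*t^3 + 56*t^4)) +
      n^2*(394 + 1776*t + 2790*t^2 + 1814*t^3 + 284*t^4 + (1 - 2*t)*(60*t^4 + 16*t^5)) +
      n*(1959/16 + 10771/16*t + 1369*t^2 + 5065/4*t^3 + 507*t^4 + 24*t^5 +
        (1 - 2*t)*(13*t^5 + 2*t^6)) +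
      (495/32 + 3243/32*t + 254*t^2 + 2441/8*t^3 + 355/2*t^4 + 36*t^5 +
        (1 - 2*t)*(5/2*t^5 + t^6)) := by
      positivity
    linear_combination key

theorem frobSq_Amat_le {lam : ℝ} (hlam : -(1/2 : ℝ) < lam) (m : ℕ) :
    (2*lam + 1)^2 * (2*lam + 5) * (2*lam + 3) * frobSq (Amat lam m) ≤
      4 * (2*lam + 3) * ((m : ℝ) + lam + 5/2)^2 *
        (((m : ℝ) + 1/2)^2 * ((m : ℝ) + 1/2 + lam/2)^2 * ((m : ℝ) + 1/2 + lam)^2) := by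
  have h₃ : 0 < 2*lam + 3 := by linarith
  induction m with
  | zero =>
    rw [frobSq_Amat_zero, mul_zero]
    positivity
  | succ n ih =>
    rw [frobSq_Amat_succ hlam]
    refine (add_le_add_left ih _).trans ?_
    obtain ⟨t, rfl⟩ : ∃ t, lam = t - 1/2 := ⟨lam + 1/2, by ring⟩
    have ht : 0 ≤ t := by linarith
    push_cast
    rw [← sub_nonneg]
    ring_nf
    positivity

theorem Amat_frobenius_bounds (lam : ℝ) (hlam : -(1/2 : ℝ) < lam) (m : ℕ) (hm : 1 ≤ m) :
    4/((2*lam + 1)^2 * (2*lam + 5)) * (((m : ℝ) + min 0 lam) * ((m : ℝ) + min 0 lam + 4)) *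
        ((m : ℝ)^2 * ((m : ℝ) + lam/2)^2 * ((m : ℝ) + lam)^2)
      ≤ frobSq (Amat lam m) ∧
    frobSq (Amat lam m) ≤
      4/((2*lam + 1)^2 * (2*lam + 5)) * ((m : ℝ) + lam + max 0 lam + 5/2)^2 *
        (((m : ℝ) + 1/2)^2 * ((m : ℝ) + 1/2 + lam/2)^2 * ((m : ℝ) + 1/2 + lam)^2) := by
  have h₀ : 0 < 2*lam + 1 := by linarith
  have h₃ : 0 < 2*lam + 3 := by linarith
  have h₅ : 0 < 2*lam + 5 := by linarith
  have hN : 0 < (2*lam + 1)^2 * (2*lam + 5) * (2*lam + 3) := by positivity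
  have hc : ∀ p q : ℝ, (2*lam + 1)^2 * (2*lam + 5) * (2*lam + 3) *
      (4/((2*lam + 1)^2 * (2*lam + 5)) * p * q) = 4 * (2*lam + 3) * p * q := by
    intro p q
    field_simp
  constructor
  · refine le_of_mul_le_mul_left ?_ hN
    rw [hc]
    rcases le_total 0 lam with h | h
    · simpa only [min_eq_left h, add_zero] using le_frobSq_Amat_of_nonneg h m
    · simpa only [min_eq_right h] using le_frobSq_Amat_of_nonpos hlam h m
  · refine le_of_mul_le_mul_left ?_ hN
    rw [hc]
    have hm' : (1:ℝ) ≤ m := by exact_mod_cast hm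
    have h₁ : 0 ≤ (m : ℝ) + lam + 5/2 := by linarith
    have h₂ : (m : ℝ) + lam + 5/2 ≤ (m : ℝ) + lam + max 0 lam + 5/2 := by
      linarith [le_max_left 0 lam]
    refine (frobSq_Amat_le hlam m).trans ?_
    exact mul_le_mul_of_nonneg_right
      (mul_le_mul_of_nonneg_left (pow_le_pow_left₀ h₁ h₂ 2) (by positivity)) (by positivity)
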